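/- Let T be a rooted tree on the vertex set of a flow graph G that has the parent property, and let v ≠ s. If x is a vertex on a simple path P in G from t(v) to v, then x is a descendant of t(v) in T and x is not a proper descendant of v in T. -/

import Mathlib

variable {V : Type*}

/-- `IsWalk A u v p`: `p` is a path from `u` to `v` in the digraph with arc
relation `A`, listing all of its vertices in order. -/
def IsWalk (A : V → V → Prop) (u v : V) (p : List V) : Prop :=
  p.Chain' A ∧ p.head? = some u ∧ p.getLast? = some v

/-- A flow graph: a directed graph with arc relation `A` and start vertex `s`
such that every vertex is reachable from `s` and no arc enters `s`. -/
structure FlowGraph (V : Type*) where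
  A : V → V → Prop
  s : V
  reach : ∀ v : V, ∃ p : List V, IsWalk A s v p
  no_enter : ∀ v : V, ¬ A v s

/-- `DomOn A s v w`: `v` lies on every path from `s` to `w` in the digraph with
arc relation `A`. -/
def DomOn (A : V → V → Prop) (s v w : V) : Prop :=
  ∀ p : List V, IsWalk A s w p → v ∈ p

/-- `v` dominates `w` in the flow graph `G`. -/
def FlowGraph.Dom (G : FlowGraph V) (v w : V) : Prop :=
  DomOn G.A G.s v w

/-- A rooted tree on vertex set `V`, given by a parent function: the root is a
fixed point of the parent function, and iterating the parent function from any
vertex eventually reaches the root. -/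
structure ParentTree (V : Type*) where
  parent : V → V
  root : V
  parent_root : parent root = root
  reaches_root : ∀ v : V, ∃ n : ℕ, parent^[n] v = root

/-- `T.Anc x y`: `x` is an ancestor of `y` in the rooted tree `T` (every vertex
is an ancestor of itself). -/
def ParentTree.Anc (T : ParentTree V) (x y : V) : Prop :=
  ∃ n : ℕ, T.parent^[n] y = x

/-- `T` has the parent property with respect to `G`: for every arc `(v, w)`,
the parent of `w` is an ancestor of `v` in `T`. -/
def ParentProperty (G : FlowGraph V) (T : ParentTree V) : Prop :=
  ∀ v w : V, G.A v w → T.Anc (T.parent w) v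

/-- The sibling property with respect to an arbitrary arc relation `A` with
start vertex `s`: no non-root vertex dominates a distinct vertex with the same
parent. -/
def SiblingPropertyOn (A : V → V → Prop) (s : V) (T : ParentTree V) : Prop :=
  ∀ v w : V, v ≠ T.root → w ≠ T.root → v ≠ w → T.parent v = T.parent w →
    ¬ DomOn A s v w

/-- `T` has the sibling property with respect to the flow graph `G`. -/
def SiblingProperty (G : FlowGraph V) (T : ParentTree V) : Prop :=
  SiblingPropertyOn G.A G.s T

/-- `T` is the dominator tree of the digraph with arc relation `A` and start
vertex `s`: `T` is rooted at `s`, and the parent of every vertex `v ≠ s` is its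
immediate dominator, i.e. a strict dominator of `v` that is dominated by every
strict dominator of `v`. -/
def IsDomTreeOn (A : V → V → Prop) (s : V) (T : ParentTree V) : Prop :=
  T.root = s ∧ ∀ v : V, v ≠ s →
    DomOn A s (T.parent v) v ∧ T.parent v ≠ v ∧
    ∀ u : V, DomOn A s u v → u ≠ v → DomOn A s u (T.parent v)

/-- `T` is the dominator tree of the flow graph `G`. -/
def IsDomTree (G : FlowGraph V) (T : ParentTree V) : Prop :=
  IsDomTreeOn G.A G.s T

/-- `ord` is (the numbering of) a preorder of the rooted tree `T`: an injective
numbering of the vertices such that for every vertex `v` the descendants of `v`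
are ordered consecutively, with `v` first. -/
def IsTreePreorder (T : ParentTree V) (ord : V → ℕ) : Prop :=
  Function.Injective ord ∧
  (∀ v x : V, T.Anc v x → ord v ≤ ord x) ∧
  (∀ v x y z : V, T.Anc v x → T.Anc v z → ord x ≤ ord y → ord y ≤ ord z →
    T.Anc v y)

/-- A preorder `ord` of `T` is low-high on the digraph with arc relation `A`
and start vertex `s`: for every `v ≠ s`, either `(t(v), v)` is an arc, or there
are arcs `(u, v)` and `(w, v)` with `u < v < w` in the order and `w` not a
descendant of `v` in `T`. -/
def LowHighOn (A : V → V → Prop) (s : V) (T : ParentTree V) (ord : V → ℕ) :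
    Prop :=
  IsTreePreorder T ord ∧
  ∀ v : V, v ≠ s → (A (T.parent v) v ∨
    ∃ u w : V, A u v ∧ A w v ∧ ord u < ord v ∧ ord v < ord w ∧ ¬ T.Anc v w)

/-- A low-high order of `T` on the flow graph `G`. -/
def LowHigh (G : FlowGraph V) (T : ParentTree V) (ord : V → ℕ) : Prop :=
  LowHighOn G.A G.s T ord

/-- `B` is (the arc relation of) a spanning tree of `G` rooted at `s`: a
subgraph of `G` in which no arc enters `s`, every vertex other than `s` has
exactly one entering arc, and every vertex is reachable from `s`. -/
def IsSpanningTree (G : FlowGraph V) (B : V → V → Prop) : Prop :=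
  (∀ u v : V, B u v → G.A u v) ∧
  (∀ v : V, ¬ B v G.s) ∧
  (∀ v : V, v ≠ G.s → ∃! u : V, B u v) ∧
  (∀ v : V, ∃ p : List V, IsWalk B G.s v p)

/-- Spanning trees `B` and `R` of `G` rooted at `s` are independent: for every
vertex `v`, the paths from `s` to `v` in `B` and in `R` have in common only
dominators of `v`. -/
def Independent (G : FlowGraph V) (B R : V → V → Prop) : Prop :=
  ∀ v : V, ∀ p q : List V, IsWalk B G.s v p → IsWalk R G.s v q →
    ∀ x : V, x ∈ p → x ∈ q → G.Dom x v

/-- Spanning trees `B` and `R` of `G` rooted at `s` are strongly independent: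
for every pair of vertices `v`, `w`, either the path from `s` to `v` in `B` and
the path from `s` to `w` in `R` have in common only common dominators of `v`
and `w`, or the same holds with the roles of `B` and `R` exchanged. -/
def StronglyIndependent (G : FlowGraph V) (B R : V → V → Prop) : Prop :=
  ∀ v w : V,
    (∀ p q : List V, IsWalk B G.s v p → IsWalk R G.s w q →
      ∀ x : V, x ∈ p → x ∈ q → G.Dom x v ∧ G.Dom x w) ∨
    (∀ p q : List V, IsWalk R G.s v p → IsWalk B G.s w q →
      ∀ x : V, x ∈ p → x ∈ q → G.Dom x v ∧ G.Dom x w)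

/-- `IsDerivedArcOf G T v b a`: `(a, b)` is the derived arc of the arc `(v, b)`
of `G` with respect to `T`: `b` is not an ancestor of `v` in `T`, and `a = v`
if `v` is the parent of `b`, while otherwise `a` is the sibling of `b` in `T`
that is an ancestor of `v`. -/
def IsDerivedArcOf (G : FlowGraph V) (T : ParentTree V) (v b a : V) : Prop :=
  G.A v b ∧ ¬ T.Anc b v ∧
    ((v = T.parent b ∧ a = v) ∨
     (v ≠ T.parent b ∧ a ≠ T.root ∧ T.parent a = T.parent b ∧ T.Anc a v))

/-- The arc relation of the derived graph of `G` with respect to `T`. -/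
def DerivedArc (G : FlowGraph V) (T : ParentTree V) (a b : V) : Prop :=
  ∃ v : V, IsDerivedArcOf G T v b a

/-- `S` is the vertex set of a strongly connected subgraph of the digraph with
arc relation `A`. -/
def StronglyConnectedSet (A : V → V → Prop) (S : Set V) : Prop :=
  S.Nonempty ∧ ∀ u ∈ S, ∀ v ∈ S, ∃ p : List V,
    IsWalk A u v p ∧ ∀ x ∈ p, x ∈ S

/-- `G` is reducible: every strongly connected subgraph has a single entry
vertex, i.e. a vertex of the subgraph contained in every path from `s` to a
vertex of the subgraph. -/
def Reducible (G : FlowGraph V) : Prop :=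
  ∀ S : Set V, StronglyConnectedSet G.A S →
    ∃ v ∈ S, ∀ u ∈ S, ∀ p : List V, IsWalk G.A G.s u p → v ∈ p

/-- A digraph is acyclic if it has no cycle (a path from a vertex to itself
with at least one arc). -/
def Acyclic (A : V → V → Prop) : Prop :=
  ¬ ∃ (v : V) (p : List V), IsWalk A v v p ∧ 2 ≤ p.length

/-- `IsHighWalk A ν u v p`: `p` is a high path from `u` to `v`: a path all of
whose vertices other than `u` and `v` are greater (in the numbering `ν`) than
both `u` and `v`. -/
def IsHighWalk (A : V → V → Prop) (ν : V → ℕ) (u v : V) (p : List V) : Prop :=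
  IsWalk A u v p ∧ ∀ x ∈ p, x ≠ u → x ≠ v → ν u < ν x ∧ ν v < ν x

/-!
Let `u` be any vertex. If an arc leads into the subtree of `u` and its head is not `u` itself, then
the parent of the head lies in this subtree, so by the parent property the tail lies in it too.
Hence a walk that ends in the subtree of `u`, and that does not visit `u` after its first vertex,
stays inside the subtree.

For `u = t(v)` this applies to the whole simple path from `t(v)` to `v`. For `u = v` it applies to
the part of the path that ends at a supposed proper descendant of `v`: this part avoids `v`, yet
`t(v)` would be a descendant of `v`, which only happens when `t(v) = v` is the root.
-/

namespace ParentTree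

variable {T : ParentTree V} {u v w : V}

theorem Anc.refl (v : V) : T.Anc v v :=
  ⟨0, rfl⟩

theorem Anc.trans (huv : T.Anc u v) (hvw : T.Anc v w) : T.Anc u w := by
  obtain ⟨m, rfl⟩ := huv
  obtain ⟨n, rfl⟩ := hvw
  exact ⟨m + n, Function.iterate_add_apply T.parent m n w⟩

theorem anc_parent (v : V) : T.Anc (T.parent v) v :=
  ⟨1, rfl⟩

theorem Anc.eq_or_anc_parent (huv : T.Anc u v) : v = u ∨ T.Anc u (T.parent v) := by
  obtain ⟨_ | n, hn⟩ := huv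
  · exact .inl hn
  · exact .inr ⟨n, hn⟩

theorem Anc.eq_root (h : T.Anc v T.root) : v = T.root := by
  obtain ⟨n, rfl⟩ := h
  exact Function.iterate_fixed T.parent_root n

theorem Anc.parent_eq_self (h : T.Anc v (T.parent v)) : T.parent v = v := by
  have anc_step : ∀ w, T.Anc v w → T.Anc v (T.parent w) := by
    intro w hw
    obtain rfl | hw := hw.eq_or_anc_parent
    · exact h
    · exact hw
  obtain ⟨n, hn⟩ := T.reaches_root v
  have anc_root : T.Anc v T.root := hn ▸ Function.Iterate.rec (T.Anc v) (.refl v) anc_step n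
  rw [anc_root.eq_root, T.parent_root]

end ParentTree

namespace IsWalk

variable {A : V → V → Prop} {a b x : V} {p : List V}

theorem head_mem (hp : IsWalk A a b p) : a ∈ p :=
  List.mem_of_head? hp.2.1

theorem head_notMem_tail (hp : IsWalk A a b p) (hnodup : p.Nodup) : a ∉ p.tail := by
  obtain ⟨q, rfl⟩ := List.head?_eq_some_iff.1 hp.2.1
  exact (List.nodup_cons.1 hnodup).1

theorem exists_isWalk_notMem (hp : IsWalk A a b p) (hnodup : p.Nodup) (hx : x ∈ p) (hxb : x ≠ b) :
    ∃ q, IsWalk A a x q ∧ b ∉ q := by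
  obtain ⟨hchain, hhead, hlast⟩ := hp
  obtain ⟨l, rfl⟩ := List.getLast?_eq_some_iff.1 hlast
  have hxl : x ∈ l := (List.mem_append.1 hx).resolve_right (mt List.mem_singleton.1 hxb)
  obtain ⟨q, r, rfl⟩ := List.append_of_mem hxl
  have hprefix : q ++ [x] <+: (q ++ x :: r) ++ [b] := ⟨r ++ [b], by simp⟩
  refine ⟨q ++ [x], ⟨List.IsChain.prefix hchain hprefix, ?_, List.getLast?_concat⟩, fun hb ↦ ?_⟩
  · simpa [List.head?_append] using hhead
  · have hbl : b ∈ q ++ x :: r := List.IsPrefix.subset ⟨r, by simp⟩ hb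
    exact List.disjoint_of_nodup_append hnodup hbl (List.mem_singleton_self b)

end IsWalk

/-- The parent property of `T` with respect to an arbitrary arc relation `A`, which need not come
from a flow graph. `ParentProperty G T` unfolds to the case `A = G.A`. -/
def ParentPropertyOn (A : V → V → Prop) (T : ParentTree V) : Prop :=
  ∀ v w : V, A v w → T.Anc (T.parent w) v

namespace ParentPropertyOn

variable {A : V → V → Prop} {T : ParentTree V} {a b u v w x : V} {p : List V}

theorem anc_of_arc (hT : ParentPropertyOn A T) (hvw : A v w) (huw : T.Anc u w) (hwu : w ≠ u) :
    T.Anc u v :=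
  (huw.eq_or_anc_parent.resolve_left hwu).trans (hT v w hvw)

theorem anc_of_isWalk (hT : ParentPropertyOn A T) (hp : IsWalk A a b p) (hub : T.Anc u b)
    (hu : u ∉ p.tail) (hx : x ∈ p) : T.Anc u x := by
  obtain ⟨hchain, -, hlast⟩ := hp
  have hchain' : p.IsChain fun v w ↦ A v w ∧ w ≠ u :=
    List.IsChain.imp_of_mem_tail_imp
      (fun v w _ hw hvw ↦ ⟨hvw, ne_of_mem_of_not_mem hw hu⟩) hchain
  obtain ⟨q, rfl⟩ := List.getLast?_eq_some_iff.1 hlast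
  exact hchain'.backwards_induction (T.Anc u) _
    (fun v w hvw huw ↦ hT.anc_of_arc hvw.1 huw hvw.2)
    (fun _ ↦ List.getLast_concat.symm ▸ hub) x hx

end ParentPropertyOn

theorem stmt3_general {A : V → V → Prop} {T : ParentTree V} (hT : ParentPropertyOn A T) {v : V}
    {p : List V} (hp : IsWalk A (T.parent v) v p) (hsimple : p.Nodup) {x : V} (hx : x ∈ p) :
    T.Anc (T.parent v) x ∧ ¬ (T.Anc v x ∧ x ≠ v) := by
  refine ⟨hT.anc_of_isWalk hp (T.anc_parent v) (hp.head_notMem_tail hsimple) hx, ?_⟩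
  rintro ⟨hvx, hxv⟩
  obtain ⟨q, hq, hvq⟩ := hp.exists_isWalk_notMem hsimple hx hxv
  have anc_parent : T.Anc v (T.parent v) :=
    hT.anc_of_isWalk hq hvx (fun hv ↦ hvq (List.mem_of_mem_tail hv)) hq.head_mem
  exact hvq (anc_parent.parent_eq_self ▸ hq.head_mem)

/-- If `T` has the parent property, `v ≠ s`, and `x` lies on a simple path in
`G` from `t(v)` to `v`, then `x` is a descendant of `t(v)` in `T` but not a
proper descendant of `v`. -/
theorem stmt3 [Fintype V] (G : FlowGraph V) (T : ParentTree V)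
    (hroot : T.root = G.s) (hpp : ParentProperty G T)
    (v : V) (hv : v ≠ G.s) (p : List V)
    (hp : IsWalk G.A (T.parent v) v p) (hsimple : p.Nodup)
    (x : V) (hx : x ∈ p) :
    T.Anc (T.parent v) x ∧ ¬ (T.Anc v x ∧ x ≠ v) :=
  stmt3_general hpp hp hsimple hx
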